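/- arXiv:2102.01854 — 8 statements merged into one kernel-verified Lean document; each statement's English description precedes it below -/
import Mathlib

section
/- Let m be an integer with 0 ≤ m ≤ n − k, let M ⊆ C satisfy |M| ≤ m, and let A, A' agree on every k-element subset of C disjoint from M. Let y ∈ L be a label such that for every label i ≠ y, p_y − p_i > 2 − 2·C(n−m,k)/C(n,k). Then for every label i ≠ y, p_y' > p_i'; in particular, the ensemble global model still predicts y for the testing example after at most m clients become malicious. -/
/-!
The number of `k`-subsets of `C` that meet `M` is `C(n,k) - C(n-|M|,k) ≤ C(n,k) - C(n-m,k)`. Since `A`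
and `A'` differ only on such subsets, every label probability moves by at most
`1 - C(n-m,k)/C(n,k)`, so the gap `p_y - p_i` shrinks by at most twice this amount.
-/

/-- The label probability: the fraction of the `C(n,k)` subsamples (k-element
subsets of the client set `C`) on which the prediction function `A` predicts
label `i`. -/
noncomputable def labelProb {ι L : Type*} (n k : ℕ) (C : Finset ι)
    (A : Finset ι → L) (i : L) : ℝ :=
  letI := Classical.decEq L
  (((C.powersetCard k).filter (fun s => A s = i)).card : ℝ) / (n.choose k : ℝ)

/-- At most `C(n,k) - C(n-m,k)` of the `k`-subsets of `C` meet `M`, because the `k`-subsets of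
`C \ M` do not. Written additively to avoid truncated subtraction. -/
lemma card_meeting_add_choose_le {ι : Type*} [DecidableEq ι] (k m : ℕ) (C M : Finset ι)
    (hMC : M ⊆ C) (hM : M.card ≤ m) :
    ((C.powersetCard k).filter (fun s => ¬ s ∩ M = ∅)).card + (C.card - m).choose k
      ≤ C.card.choose k := by
  have h1 : (C.card - m).choose k ≤ ((C.powersetCard k).filter (fun s => s ∩ M = ∅)).card := by
    calc (C.card - m).choose k ≤ (C \ M).card.choose k := by
          rw [Finset.card_sdiff_of_subset hMC]
          exact Nat.choose_le_choose k (Nat.sub_le_sub_left hM _)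
      _ = ((C \ M).powersetCard k).card := (Finset.card_powersetCard _ _).symm
      _ ≤ _ := by
          apply Finset.card_le_card
          intro s hs
          rw [Finset.mem_powersetCard, Finset.subset_sdiff] at hs
          rw [Finset.mem_filter, Finset.mem_powersetCard, ← Finset.disjoint_iff_inter_eq_empty]
          exact ⟨⟨hs.1.1, hs.2⟩, hs.1.2⟩
  have h2 := Finset.card_filter_add_card_filter_not (s := C.powersetCard k) (fun s => s ∩ M = ∅)
  rw [Finset.card_powersetCard] at h2
  omega

/-- A label probability grows by at most `1 - C(n-m,k)/C(n,k)` when the predictions change only on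
subsamples meeting `M`. The roles of `A` and `B` are interchangeable, so this also bounds the
decrease. -/
lemma labelProb_le_add {ι L : Type*} [DecidableEq ι] (n k m : ℕ) (hkn : k ≤ n)
    (C M : Finset ι) (hC : C.card = n) (hMC : M ⊆ C) (hM : M.card ≤ m) (A B : Finset ι → L)
    (hagree : ∀ s ∈ C.powersetCard k, s ∩ M = ∅ → A s = B s) (i : L) :
    labelProb n k C A i ≤
      labelProb n k C B i + (1 - ((n - m).choose k : ℝ) / (n.choose k : ℝ)) := by
  classical
  have hpos : (0 : ℝ) < (n.choose k : ℝ) := by exact_mod_cast Nat.choose_pos hkn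
  have hD := card_meeting_add_choose_le k m C M hMC hM
  rw [hC] at hD
  have hsub : ((C.powersetCard k).filter (fun s => A s = i)).card ≤
      ((C.powersetCard k).filter (fun s => B s = i)).card +
        ((C.powersetCard k).filter (fun s => ¬ s ∩ M = ∅)).card := by
    refine (Finset.card_le_card ?_).trans (Finset.card_union_le _ _)
    intro s hs
    rw [Finset.mem_filter] at hs
    rw [Finset.mem_union, Finset.mem_filter, Finset.mem_filter]
    by_cases h : s ∩ M = ∅
    · exact Or.inl ⟨hs.1, (hagree s hs.1 h).symm.trans hs.2⟩
    · exact Or.inr ⟨hs.1, h⟩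
  have key : (((C.powersetCard k).filter (fun s => A s = i)).card : ℝ) + ((n - m).choose k : ℝ) ≤
      (((C.powersetCard k).filter (fun s => B s = i)).card : ℝ) + (n.choose k : ℝ) := by
    exact_mod_cast (by omega :
      ((C.powersetCard k).filter (fun s => A s = i)).card + (n - m).choose k ≤
        ((C.powersetCard k).filter (fun s => B s = i)).card + n.choose k)
  have hdiv := div_le_div_of_nonneg_right key hpos.le
  rw [add_div, add_div, div_self hpos.ne'] at hdiv
  have hA : labelProb n k C A i =
      (((C.powersetCard k).filter (fun s => A s = i)).card : ℝ) / (n.choose k : ℝ) := by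
    unfold labelProb; congr!
  have hB : labelProb n k C B i =
      (((C.powersetCard k).filter (fun s => B s = i)).card : ℝ) / (n.choose k : ℝ) := by
    unfold labelProb; congr!
  rw [hA, hB]
  linarith

theorem stmt0 {ι L : Type*} [DecidableEq ι]
    (n k : ℕ) (hk1 : 1 ≤ k) (hkn : k ≤ n)
    (C : Finset ι) (hC : C.card = n)
    (m : ℕ) (hm : m ≤ n - k)
    (M : Finset ι) (hMC : M ⊆ C) (hMcard : M.card ≤ m)
    (A A' : Finset ι → L)
    (hagree : ∀ s ∈ C.powersetCard k, s ∩ M = ∅ → A s = A' s)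
    (y : L)
    (hy : ∀ i : L, i ≠ y →
      labelProb n k C A y - labelProb n k C A i >
        2 - 2 * ((n - m).choose k : ℝ) / (n.choose k : ℝ)) :
    ∀ i : L, i ≠ y → labelProb n k C A' y > labelProb n k C A' i := by
  intro i hi
  have hgap := hy i hi
  have hdown := labelProb_le_add n k m hkn C M hC hMC hMcard A A' hagree y
  have hup := labelProb_le_add n k m hkn C M hC hMC hMcard A' A
    (fun s hs h => (hagree s hs h).symm) i
  rw [mul_div_assoc] at hgap
  linarith
end

section
/- Let y ∈ L and let p_lb and p̄ be real numbers such that p_i ≤ p̄ for every label i ≠ y and p̄ ≤ p_lb ≤ p_y. Let m be an integer with 0 ≤ m ≤ n − k satisfying ⌈p_lb·C(n,k)⌉/C(n,k) − ⌊p̄·C(n,k)⌋/C(n,k) > 2 − 2·C(n−m,k)/C(n,k). Then for every set M ⊆ C with |M| ≤ m and every A' that agrees with A on every k-element subset of C disjoint from M, one has p_y' > p_i' for every label i ≠ y; i.e., the ensemble global model provably predicts y for the testing example when at most m clients become malicious. -/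
/-- If two predictions agree on all `k`-subsets of `C` that avoid `M`, then the count of any label
under `f` exceeds its count under `g` by at most the number of `k`-subsets of `C` meeting `M`,
which is `C(|C|,k) - C(|C|-|M|,k)`; stated additively to avoid truncated subtraction. -/
lemma card_filter_add_choose_le {ι L : Type*} [DecidableEq ι] [DecidableEq L]
    (k : ℕ) (C M : Finset ι) (hM : M ⊆ C)
    (f g : Finset ι → L) (h : ∀ s ∈ C.powersetCard k, s ∩ M = ∅ → f s = g s) (l : L) :
    ((C.powersetCard k).filter (fun s => f s = l)).card + (C.card - M.card).choose k
      ≤ ((C.powersetCard k).filter (fun s => g s = l)).card + C.card.choose k := by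
  have hsub : (C \ M).powersetCard k ⊆ C.powersetCard k :=
    Finset.powersetCard_mono Finset.sdiff_subset
  have hcover : (C.powersetCard k).filter (fun s => f s = l) ⊆
      (C.powersetCard k).filter (fun s => g s = l) ∪
        (C.powersetCard k \ (C \ M).powersetCard k) := by
    intro s hs
    obtain ⟨hsC, hfs⟩ := Finset.mem_filter.mp hs
    by_cases hd : s ∩ M = ∅
    · exact Finset.mem_union_left _ (Finset.mem_filter.mpr ⟨hsC, (h s hsC hd) ▸ hfs⟩)
    · refine Finset.mem_union_right _ (Finset.mem_sdiff.mpr ⟨hsC, fun hs' => hd ?_⟩)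
      have hs'' := (Finset.mem_powersetCard.mp hs').1
      exact Finset.disjoint_iff_inter_eq_empty.mp
        (Finset.disjoint_of_subset_left hs'' Finset.sdiff_disjoint)
  have h1 := (Finset.card_le_card hcover).trans (Finset.card_union_le _ _)
  have h2 := Finset.card_sdiff_add_card_eq_card hsub
  rw [Finset.card_powersetCard, Finset.card_powersetCard, Finset.card_sdiff_of_subset hM] at h2
  omega

theorem stmt1 {ι L : Type*} [DecidableEq ι]
    (n k : ℕ) (hk1 : 1 ≤ k) (hkn : k ≤ n)
    (C : Finset ι) (hC : C.card = n)
    (A : Finset ι → L) (y : L) (plb pbar : ℝ)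
    (hub : ∀ i : L, i ≠ y → labelProb n k C A i ≤ pbar)
    (hbp : pbar ≤ plb)
    (hlb : plb ≤ labelProb n k C A y)
    (m : ℕ) (hm : m ≤ n - k)
    (hcert : (⌈plb * (n.choose k : ℝ)⌉ : ℝ) / (n.choose k : ℝ)
        - (⌊pbar * (n.choose k : ℝ)⌋ : ℝ) / (n.choose k : ℝ)
        > 2 - 2 * ((n - m).choose k : ℝ) / (n.choose k : ℝ)) :
    ∀ M : Finset ι, M ⊆ C → M.card ≤ m →
      ∀ A' : Finset ι → L,
        (∀ s ∈ C.powersetCard k, s ∩ M = ∅ → A s = A' s) →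
        ∀ i : L, i ≠ y → labelProb n k C A' y > labelProb n k C A' i := by
  let := Classical.decEq L
  intro M hMC hMm A' hA i hi
  have hN : (0 : ℝ) < (n.choose k : ℝ) := by exact_mod_cast Nat.choose_pos hkn
  have hy := card_filter_add_choose_le k C M hMC A A' hA y
  have hi' := card_filter_add_choose_le k C M hMC A' A (fun s hs hd => (hA s hs hd).symm) i
  have hmono : (n - m).choose k ≤ (n - M.card).choose k := Nat.choose_le_choose k (by omega)
  rw [hC] at hy hi'
  have hubi := hub i hi
  unfold labelProb at hubi hlb ⊢
  rw [div_le_iff₀ hN] at hubi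
  rw [le_div_iff₀ hN] at hlb
  rw [gt_iff_lt, div_lt_div_iff_of_pos_right hN]
  have hceil := Int.ceil_le.mpr (show plb * (n.choose k : ℝ) ≤ (((_ : ℕ) : ℤ) : ℝ) by
    rw [Int.cast_natCast]; exact hlb)
  have hfloor := Int.le_floor.mpr (show (((_ : ℕ) : ℤ) : ℝ) ≤ pbar * (n.choose k : ℝ) by
    rw [Int.cast_natCast]; exact hubi)
  have hcert' : 2 * (n.choose k : ℤ) - 2 * ((n - m).choose k : ℤ)
      < ⌈plb * (n.choose k : ℝ)⌉ - ⌊pbar * (n.choose k : ℝ)⌋ := by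
    have h2 : (2 : ℝ) - 2 * ((n - m).choose k : ℝ) / (n.choose k : ℝ)
        = (2 * (n.choose k : ℝ) - 2 * ((n - m).choose k : ℝ)) / (n.choose k : ℝ) := by
      field_simp
    rw [gt_iff_lt, h2, ← sub_div, div_lt_div_iff_of_pos_right hN] at hcert
    exact_mod_cast hcert
  rw [Nat.cast_lt]
  zify at hy hi' hmono ⊢
  grind
end

section
/- Let n, k, m be integers with 1 ≤ k ≤ n and 1 ≤ m ≤ n, let L be a set of labels with at least 3 elements, let y, z ∈ L be distinct labels, and let p_lb, p̄ be real numbers with 0 ≤ p̄ ≤ p_lb ≤ 1 and p_lb + p̄ ≤ 1. Assume m violates the certification condition, i.e., ⌈p_lb·C(n,k)⌉/C(n,k) − ⌊p̄·C(n,k)⌋/C(n,k) ≤ 2 − 2·C(n−m,k)/C(n,k). Then there exist a finite set C with |C| = n, a set M ⊆ C with |M| = m, and functions A, A' from the k-element subsets of C to L agreeing on every k-element subset disjoint from M, such that p_y ≥ p_lb and p_z ≤ p̄, yet there exists a label i ≠ y with p_i' ≥ p_y' (so after the corruption the ensemble global model does not strictly predict y). In other words, the certified security level derived from the certification condition is tight: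 no larger certified security level can be guaranteed for an arbitrary base federated learning algorithm given only the bounds p_lb and p̄. -/
/-- The worst-case attack on a family `U` of subsamples in which those in `T` may be corrupted:
`Y` and `Z` are the subsamples that predict the top label and the runner-up before the attack.
After the attack, the top label keeps `Y \ T` and the runner-up has `T ∪ Z`. -/
lemma exists_extremal_families {α : Type*} [DecidableEq α] (U T : Finset α) (hT : T ⊆ U)
    (a b : ℕ) (hab : a + b ≤ U.card) (hv : a ≤ b + 2 * T.card) :
    ∃ Y Z : Finset α, Y ⊆ U ∧ Z ⊆ U ∧ Disjoint Y Z ∧ Y.card = a ∧ Z.card = b ∧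
      (Y \ T).card ≤ (T ∪ Z).card := by
  rcases le_total a T.card with h | h
  · obtain ⟨Y, hYT, hYc⟩ := Finset.exists_subset_card_eq h
    have hYU := hYT.trans hT
    obtain ⟨Z, hZ, hZc⟩ := Finset.exists_subset_card_eq (s := U \ Y) (n := b)
      (by rw [Finset.card_sdiff_of_subset hYU]; omega)
    refine ⟨Y, Z, hYU, hZ.trans Finset.sdiff_subset,
      (Finset.disjoint_of_subset_left hZ Finset.sdiff_disjoint).symm, hYc, hZc, ?_⟩
    simp [Finset.sdiff_eq_empty_iff_subset.2 hYT]
  · obtain ⟨Y, hTY, hYU, hYc⟩ := Finset.exists_subsuperset_card_eq hT h (by omega)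
    obtain ⟨Z, hZ, hZc⟩ := Finset.exists_subset_card_eq (s := U \ Y) (n := b)
      (by rw [Finset.card_sdiff_of_subset hYU]; omega)
    have hd : Disjoint Y Z := (Finset.disjoint_of_subset_left hZ Finset.sdiff_disjoint).symm
    refine ⟨Y, Z, hYU, hZ.trans Finset.sdiff_subset, hd, hYc, hZc, ?_⟩
    rw [Finset.card_sdiff_of_subset hTY,
      Finset.card_union_of_disjoint (Finset.disjoint_of_subset_left hTY hd)]
    omega

theorem stmt6 {L : Type*}
    (n k m : ℕ) (hk1 : 1 ≤ k) (hkn : k ≤ n) (hm1 : 1 ≤ m) (hmn : m ≤ n)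
    (y z : L) (hyz : y ≠ z) (hL : ∃ w : L, w ≠ y ∧ w ≠ z)
    (plb pbar : ℝ) (hpbar0 : 0 ≤ pbar) (hbp : pbar ≤ plb) (hplb1 : plb ≤ 1)
    (hsum : plb + pbar ≤ 1)
    (hviol : (⌈plb * (n.choose k : ℝ)⌉ : ℝ) / (n.choose k : ℝ)
        - (⌊pbar * (n.choose k : ℝ)⌋ : ℝ) / (n.choose k : ℝ)
        ≤ 2 - 2 * ((n - m).choose k : ℝ) / (n.choose k : ℝ)) :
    ∃ (C : Finset ℕ) (M : Finset ℕ) (A A' : Finset ℕ → L),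
      C.card = n ∧ M ⊆ C ∧ M.card = m ∧
      (∀ s ∈ C.powersetCard k, s ∩ M = ∅ → A s = A' s) ∧
      plb ≤ labelProb n k C A y ∧
      labelProb n k C A z ≤ pbar ∧
      ∃ i : L, i ≠ y ∧ labelProb n k C A' (y) ≤ labelProb n k C A' i := by
  classical
  obtain ⟨w, hwy, hwz⟩ := hL
  have hN : (0 : ℝ) < (n.choose k : ℝ) := by exact_mod_cast Nat.choose_pos hkn
  have hplb0 : 0 ≤ plb := hpbar0.trans hbp
  obtain ⟨a, ha⟩ := Int.eq_ofNat_of_zero_le (Int.ceil_nonneg (mul_nonneg hplb0 hN.le))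
  obtain ⟨b, hb⟩ := Int.eq_ofNat_of_zero_le (Int.floor_nonneg.2 (mul_nonneg hpbar0 hN.le))
  have hale : plb * (n.choose k : ℝ) ≤ a := by
    have := Int.le_ceil (plb * (n.choose k : ℝ)); rw [ha] at this; exact_mod_cast this
  have hble : (b : ℝ) ≤ pbar * (n.choose k : ℝ) := by
    have := Int.floor_le (pbar * (n.choose k : ℝ)); rw [hb] at this; exact_mod_cast this
  have hab : a + b ≤ n.choose k := by
    have h1 : ⌈plb * (n.choose k : ℝ)⌉ ≤ (n.choose k : ℤ) - b := by
      rw [Int.ceil_le]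
      push_cast
      nlinarith
    rw [ha] at h1
    omega
  have hv : a + 2 * (n - m).choose k ≤ b + 2 * n.choose k := by
    rw [ha, hb, ← sub_div, div_le_iff₀ hN, sub_mul, div_mul_cancel₀ _ hN.ne'] at hviol
    have : (a : ℝ) + 2 * (n - m).choose k ≤ b + 2 * n.choose k := by
      push_cast at hviol
      linarith
    exact_mod_cast this
  set C := Finset.range n with hC
  set M := Finset.range m with hM
  have hMC : M ⊆ C := Finset.range_subset_range.2 hmn
  set U := C.powersetCard k with hU
  set T := U.filter (fun s => s ∩ M ≠ ∅) with hT
  have hUc : U.card = n.choose k := by simp [hU, hC]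
  have hTc : T.card + (n - m).choose k = n.choose k := by
    have h1 : U.filter (fun s => ¬ s ∩ M ≠ ∅) = (C \ M).powersetCard k := by
      ext s
      simp only [hU, Finset.mem_filter, Finset.mem_powersetCard, Finset.subset_sdiff,
        Finset.disjoint_iff_inter_eq_empty, not_not]
      tauto
    have h2 := Finset.card_filter_add_card_filter_not (s := U) (fun s => s ∩ M ≠ ∅)
    rw [h1, hUc, Finset.card_powersetCard, Finset.card_sdiff_of_subset hMC] at h2
    simpa [hC, hM] using h2
  obtain ⟨Y, Z, hYU, hZU, hYZ, hYc, hZc, hle⟩ :=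
    exists_extremal_families U T (Finset.filter_subset _ _) a b (by omega) (by omega)
  have hlp : ∀ (B : Finset ℕ → L) (i : L), labelProb n k C B i =
      ((U.filter (fun s => B s = i)).card : ℝ) / (n.choose k : ℝ) := by
    intro B i
    unfold labelProb
    congr!
  let A : Finset ℕ → L := fun s => if s ∈ Y then y else if s ∈ Z then z else w
  let A' : Finset ℕ → L := fun s => if s ∩ M ≠ ∅ then z else A s
  have hAy : U.filter (fun s => A s = y) = Y := by
    ext s
    have := @hYU s
    simp only [A, Finset.mem_filter]
    grind
  have hAz : U.filter (fun s => A s = z) = Z := by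
    ext s
    have := @hZU s
    have := fun h => Finset.disjoint_left.1 hYZ (show s ∈ Y from h)
    simp only [A, Finset.mem_filter]
    grind
  have hA'y : U.filter (fun s => A' s = y) ⊆ Y \ T := by
    intro s
    simp only [A', A, hT, Finset.mem_filter, Finset.mem_sdiff]
    grind
  have hA'z : T ∪ Z ⊆ U.filter (fun s => A' s = z) := by
    intro s
    have := @hZU s
    have := fun h => Finset.disjoint_left.1 hYZ (show s ∈ Y from h)
    simp only [A', A, hT, Finset.mem_filter, Finset.mem_union]
    grind
  refine ⟨C, M, A, A', by simp [hC], hMC, by simp [hM], ?_, ?_, ?_, z, hyz.symm, ?_⟩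
  · intro s _ hs
    simp [A', hs]
  · rw [hlp, hAy, hYc, le_div_iff₀ hN]
    exact hale
  · rw [hlp, hAz, hZc, div_le_iff₀ hN]
    exact hble
  · rw [hlp, hlp]
    have := (Finset.card_le_card hA'y).trans (hle.trans (Finset.card_le_card hA'z))
    gcongr
end

section
/- (Tightness, Case 1.) Let n, k, m be integers with 1 ≤ k ≤ n, 1 ≤ m ≤ n, and m ≥ n − k; let L be a set of labels with at least 3 elements, let y, z ∈ L be distinct, and let p_lb, p̄ ∈ [0,1] be reals with p_lb + p̄ ≤ 1. Then there exist a finite set C with |C| = n, a set M ⊆ C with |M| = m, and functions A, A' from the k-element subsets of C to L agreeing on every k-element subset disjoint from M, such that p_y = ⌈p_lb·C(n,k)⌉/C(n,k), p_z = ⌊p̄·C(n,k)⌋/C(n,k), p_z' ≥ 1 − C(n−m,k)/C(n,k), and p_y' ≤ C(n−m,k)/C(n,k); in particular, if m > n − k then p_z' = 1. -/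
/-- If `S` is the family of subsamples labelled `i`, then the label probability is `|S| / C(n,k)`;
this form does not mention the classical decidability instance in `labelProb`. -/
lemma labelProb_eq_of_mem_iff {ι L : Type*} (n k : ℕ) (C : Finset ι) (A : Finset ι → L) (i : L)
    (S : Finset (Finset ι)) (hS : ∀ s, s ∈ S ↔ s ∈ C.powersetCard k ∧ A s = i) :
    labelProb n k C A i = (S.card : ℝ) / (n.choose k : ℝ) := by
  let := Classical.decEq L
  unfold labelProb
  congr 3
  ext s
  rw [Finset.mem_filter, hS]

lemma toNat_ceil_add_toNat_floor_le (N : ℕ) (p q : ℝ) (hp : 0 ≤ p) (hq : 0 ≤ q)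
    (h : p + q ≤ 1) : ⌈p * (N : ℝ)⌉.toNat + ⌊q * (N : ℝ)⌋.toNat ≤ N := by
  have hN : (0 : ℝ) ≤ N := N.cast_nonneg
  have h1 : (0 : ℤ) ≤ ⌈p * (N : ℝ)⌉ := Int.ceil_nonneg (mul_nonneg hp hN)
  have h2 : (0 : ℤ) ≤ ⌊q * (N : ℝ)⌋ := Int.floor_nonneg.2 (mul_nonneg hq hN)
  have h3 : ⌈p * (N : ℝ)⌉ ≤ (N : ℤ) - ⌊q * (N : ℝ)⌋ := by
    rw [Int.ceil_le]
    push_cast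
    have := Int.floor_le (q * (N : ℝ))
    nlinarith
  omega

theorem stmt7 {L : Type*}
    (n k m : ℕ) (hk1 : 1 ≤ k) (hkn : k ≤ n) (hm1 : 1 ≤ m) (hmn : m ≤ n)
    (hmnk : n - k ≤ m)
    (y z : L) (hyz : y ≠ z) (hL : ∃ w : L, w ≠ y ∧ w ≠ z)
    (plb pbar : ℝ) (hplb0 : 0 ≤ plb) (hplb1 : plb ≤ 1)
    (hpbar0 : 0 ≤ pbar) (hpbar1 : pbar ≤ 1) (hsum : plb + pbar ≤ 1) :
    ∃ (C : Finset ℕ) (M : Finset ℕ) (A A' : Finset ℕ → L),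
      C.card = n ∧ M ⊆ C ∧ M.card = m ∧
      (∀ s ∈ C.powersetCard k, s ∩ M = ∅ → A s = A' s) ∧
      labelProb n k C A y = (⌈plb * (n.choose k : ℝ)⌉ : ℝ) / (n.choose k : ℝ) ∧
      labelProb n k C A z = (⌊pbar * (n.choose k : ℝ)⌋ : ℝ) / (n.choose k : ℝ) ∧
      1 - ((n - m).choose k : ℝ) / (n.choose k : ℝ) ≤ labelProb n k C A' z ∧
      labelProb n k C A' y ≤ ((n - m).choose k : ℝ) / (n.choose k : ℝ) ∧
      (n - k < m → labelProb n k C A' z = 1) := by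
  classical
  obtain ⟨w, hwy, hwz⟩ := hL
  have hN : (0 : ℝ) < (n.choose k : ℝ) := by exact_mod_cast Nat.choose_pos hkn
  have hab := toNat_ceil_add_toNat_floor_le (n.choose k) plb pbar hplb0 hpbar0 hsum
  have ha : (0 : ℤ) ≤ ⌈plb * (n.choose k : ℝ)⌉ := Int.ceil_nonneg (by positivity)
  have hb : (0 : ℤ) ≤ ⌊pbar * (n.choose k : ℝ)⌋ := Int.floor_nonneg.2 (by positivity)
  set P := (Finset.range n).powersetCard k with hP
  have hPc : P.card = n.choose k := by rw [hP, Finset.card_powersetCard, Finset.card_range]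
  obtain ⟨Y, hYP, hYc⟩ := Finset.exists_subset_card_eq
    (s := P) (n := ⌈plb * (n.choose k : ℝ)⌉.toNat) (by omega)
  obtain ⟨Z, hZP, hZc⟩ := Finset.exists_subset_card_eq
    (s := P \ Y) (n := ⌊pbar * (n.choose k : ℝ)⌋.toNat)
    (by rw [Finset.card_sdiff_of_subset hYP]; omega)
  have hMC : Finset.range m ⊆ Finset.range n := Finset.range_subset_range.2 hmn
  -- `D` is the family of subsamples without malicious clients.
  set D := (Finset.range n \ Finset.range m).powersetCard k with hD
  have hDc : D.card = (n - m).choose k := by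
    rw [hD, Finset.card_powersetCard, Finset.card_sdiff_of_subset hMC, Finset.card_range,
      Finset.card_range]
  have hDP : D ⊆ P := Finset.powersetCard_mono Finset.sdiff_subset
  have hDmem : ∀ s, s ∈ D ↔ s ∈ P ∧ s ∩ Finset.range m = ∅ := by
    intro s
    rw [hD, hP, Finset.mem_powersetCard, Finset.mem_powersetCard, Finset.subset_sdiff,
      Finset.disjoint_iff_inter_eq_empty]
    tauto
  let A : Finset ℕ → L := fun s => if s ∈ Y then y else if s ∈ Z then z else w
  let A' : Finset ℕ → L := fun s => if s ∩ Finset.range m = ∅ then A s else z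
  have hAy : ∀ s, s ∈ Y ↔ s ∈ P ∧ A s = y := by
    intro s
    have := @hYP s
    by_cases h1 : s ∈ Y <;> by_cases h2 : s ∈ Z <;> simp [A, h1, h2, hyz.symm, hwy, this]
  have hAz : ∀ s, s ∈ Z ↔ s ∈ P ∧ A s = z := by
    intro s
    have h3 : s ∈ Z → s ∈ P ∧ s ∉ Y := fun h => Finset.mem_sdiff.1 (hZP h)
    by_cases h2 : s ∈ Z
    · simp [A, h2, h3 h2]
    · by_cases h1 : s ∈ Y <;> simp [A, h1, h2, hyz, hwz]
  have hz' := labelProb_eq_of_mem_iff n k (Finset.range n) A' z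
    (P.filter fun s => A' s = z) (fun s => Finset.mem_filter)
  have hy' := labelProb_eq_of_mem_iff n k (Finset.range n) A' y
    (P.filter fun s => A' s = y) (fun s => Finset.mem_filter)
  have hzlb : 1 - ((n - m).choose k : ℝ) / (n.choose k : ℝ) ≤
      labelProb n k (Finset.range n) A' z := by
    have hsub : P \ D ⊆ P.filter fun s => A' s = z := by
      intro s hs
      rw [Finset.mem_sdiff, hDmem] at hs
      rw [Finset.mem_filter]
      exact ⟨hs.1, if_neg fun h => hs.2 ⟨hs.1, h⟩⟩
    have hc := Finset.card_le_card hsub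
    rw [Finset.card_sdiff_of_subset hDP, hPc, hDc, Nat.sub_le_iff_le_add] at hc
    have hc' : (n.choose k : ℝ) ≤
        ((P.filter fun s => A' s = z).card : ℝ) + ((n - m).choose k : ℝ) := by
      exact_mod_cast hc
    rw [hz', sub_le_iff_le_add, ← add_div, one_le_div hN]
    exact hc'
  refine ⟨Finset.range n, Finset.range m, A, A', Finset.card_range n, hMC, Finset.card_range m,
    fun s _ h => (if_pos h).symm, ?_, ?_, hzlb, ?_, ?_⟩
  · rw [labelProb_eq_of_mem_iff n k _ A y Y hAy, hYc]
    congr 1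
    exact_mod_cast Int.toNat_of_nonneg ha
  · rw [labelProb_eq_of_mem_iff n k _ A z Z hAz, hZc]
    congr 1
    exact_mod_cast Int.toNat_of_nonneg hb
  · rw [hy', ← hDc]
    have hsub : (P.filter fun s => A' s = y) ⊆ D := by
      intro s hs
      rw [Finset.mem_filter] at hs
      rw [hDmem]
      refine ⟨hs.1, ?_⟩
      by_contra h
      exact hyz (hs.2.symm.trans (if_neg h))
    gcongr
  · intro hlt
    apply le_antisymm
    · rw [hz', div_le_one hN, ← hPc]
      exact_mod_cast Finset.card_filter_le _ _
    · rw [Nat.choose_eq_zero_of_lt (show n - m < k by omega)] at hzlb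
      simpa using hzlb
end

section
/- (Tightness, Case 2.) Let n, k, m be integers with 1 ≤ k ≤ n and 1 ≤ m < n − k; write N = C(n,k) and c = C(n−m,k)/N. Let L be a set of labels with at least 3 elements, let y, z ∈ L be distinct, and let p_lb, p̄ be reals with 0 ≤ p_lb ≤ 1 − c and 0 ≤ p̄ ≤ c. Then there exist a finite set C with |C| = n, a set M ⊆ C with |M| = m, and functions A, A' from the k-element subsets of C to L agreeing on every k-element subset disjoint from M, such that p_y = ⌈p_lb·N⌉/N, p_z = ⌊p̄·N⌋/N, p_y' = 0, and p_z' = ⌊p̄·N⌋/N + (1 − c); in particular p_y' < p_z'. -/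
/-- If the subsamples labelled `i` by `A` are exactly those in `S`, then the label probability of
`i` is `|S| / C(n,k)`. -/
lemma labelProb_eq_card_div {ι L : Type*} (n k : ℕ) (C : Finset ι) (A : Finset ι → L) (i : L)
    (S : Finset (Finset ι)) (hS : S ⊆ C.powersetCard k)
    (h : ∀ s ∈ C.powersetCard k, A s = i ↔ s ∈ S) :
    labelProb n k C A i = (S.card : ℝ) / (n.choose k : ℝ) := by
  classical
  unfold labelProb
  congr 2
  congr 1
  ext s
  simp only [Finset.mem_filter]
  exact ⟨fun hs => (h s hs.1).1 hs.2, fun hs => ⟨hS hs, (h s (hS hs)).2 hs⟩⟩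

lemma choose_sub_lt_choose (n k m : ℕ) (hk : 1 ≤ k) (hkn : k ≤ n) (hm : 1 ≤ m) :
    (n - m).choose k < n.choose k := by
  obtain ⟨n, rfl⟩ : ∃ n', n = n' + 1 := ⟨n - 1, by omega⟩
  obtain ⟨k, rfl⟩ : ∃ k', k = k' + 1 := ⟨k - 1, by omega⟩
  have h1 : (n + 1 - m).choose (k + 1) ≤ n.choose (k + 1) :=
    Nat.choose_le_choose _ (by omega)
  have h2 : 0 < n.choose k := Nat.choose_pos (by omega)
  rw [Nat.choose_succ_succ']
  omega

theorem stmt8 {L : Type*}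
    (n k m : ℕ) (hk1 : 1 ≤ k) (hkn : k ≤ n) (hm1 : 1 ≤ m) (hm2 : m < n - k)
    (y z : L) (hyz : y ≠ z) (hL : ∃ w : L, w ≠ y ∧ w ≠ z)
    (plb pbar : ℝ) (hplb0 : 0 ≤ plb)
    (hplb1 : plb ≤ 1 - ((n - m).choose k : ℝ) / (n.choose k : ℝ))
    (hpbar0 : 0 ≤ pbar)
    (hpbar1 : pbar ≤ ((n - m).choose k : ℝ) / (n.choose k : ℝ)) :
    ∃ (C : Finset ℕ) (M : Finset ℕ) (A A' : Finset ℕ → L),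
      C.card = n ∧ M ⊆ C ∧ M.card = m ∧
      (∀ s ∈ C.powersetCard k, s ∩ M = ∅ → A s = A' s) ∧
      labelProb n k C A y = (⌈plb * (n.choose k : ℝ)⌉ : ℝ) / (n.choose k : ℝ) ∧
      labelProb n k C A z = (⌊pbar * (n.choose k : ℝ)⌋ : ℝ) / (n.choose k : ℝ) ∧
      labelProb n k C A' y = 0 ∧
      labelProb n k C A' z = (⌊pbar * (n.choose k : ℝ)⌋ : ℝ) / (n.choose k : ℝ)
        + (1 - ((n - m).choose k : ℝ) / (n.choose k : ℝ)) ∧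
      labelProb n k C A' y < labelProb n k C A' z := by
  classical
  obtain ⟨w, hwy, hwz⟩ := hL
  have hlt := choose_sub_lt_choose n k m hk1 hkn hm1
  have hN : (0 : ℝ) < (n.choose k : ℝ) := by exact_mod_cast Nat.choose_pos hkn
  have hltR : ((n - m).choose k : ℝ) < (n.choose k : ℝ) := by exact_mod_cast hlt
  set P := (Finset.range n).powersetCard k with hP
  set D := (Finset.range n \ Finset.range m).powersetCard k with hD
  have hMC : Finset.range m ⊆ Finset.range n := Finset.range_mono (by omega)
  have hPc : P.card = n.choose k := by simp [hP]
  have hDc : D.card = (n - m).choose k := by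
    rw [hD, Finset.card_powersetCard, Finset.card_sdiff_of_subset hMC]
    simp
  have hDP : D ⊆ P := Finset.powersetCard_mono Finset.sdiff_subset
  have hTc : (P \ D).card = n.choose k - (n - m).choose k := by
    rw [Finset.card_sdiff_of_subset hDP, hPc, hDc]
  have hTcR : ((P \ D).card : ℝ) = (n.choose k : ℝ) - ((n - m).choose k : ℝ) := by
    rw [hTc, Nat.cast_sub hlt.le]
  -- The numbers of `y`- and `z`-votes of `A`, as natural numbers.
  have ha : ⌈plb * (n.choose k : ℝ)⌉₊ ≤ (P \ D).card := by
    rw [Nat.ceil_le, hTcR]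
    calc plb * (n.choose k : ℝ)
        ≤ (1 - ((n - m).choose k : ℝ) / (n.choose k : ℝ)) * (n.choose k : ℝ) := by gcongr
      _ = _ := by field_simp
  have hb : ⌊pbar * (n.choose k : ℝ)⌋₊ ≤ D.card := by
    have h : pbar * (n.choose k : ℝ) ≤ (((n - m).choose k : ℕ) : ℝ) := by
      rwa [le_div_iff₀ hN] at hpbar1
    rw [hDc]
    exact Nat.floor_le_of_le h
  obtain ⟨Y, hYT, hYc⟩ := Finset.exists_subset_card_eq ha
  obtain ⟨Z, hZD, hZc⟩ := Finset.exists_subset_card_eq hb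
  have hYR : (Y.card : ℝ) = (⌈plb * (n.choose k : ℝ)⌉ : ℝ) := by
    rw [hYc]
    exact natCast_ceil_eq_intCast_ceil (by positivity)
  have hZR : (Z.card : ℝ) = (⌊pbar * (n.choose k : ℝ)⌋ : ℝ) := by
    rw [hZc]
    exact natCast_floor_eq_intCast_floor (by positivity)
  have hYZ : ∀ s ∈ Z, s ∉ Y := fun s hs hs' => (Finset.mem_sdiff.1 (hYT hs')).2 (hZD hs)
  have hZT : Disjoint Z (P \ D) := Finset.disjoint_sdiff.mono_left hZD
  have hZTsub : Z ∪ (P \ D) ⊆ P :=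
    Finset.union_subset (hZD.trans hDP) Finset.sdiff_subset
  let A : Finset ℕ → L := fun s => if s ∈ Y then y else if s ∈ Z then z else w
  let A' : Finset ℕ → L := fun s => if s ∈ Z ∪ (P \ D) then z else w
  have hAy : labelProb n k (Finset.range n) A y = (Y.card : ℝ) / (n.choose k : ℝ) := by
    refine labelProb_eq_card_div n k _ A y Y (hYT.trans Finset.sdiff_subset) fun s _ => ?_
    simp only [A]
    split_ifs with h1 h2 <;> simp [h1, hyz.symm, hwy]
  have hAz : labelProb n k (Finset.range n) A z = (Z.card : ℝ) / (n.choose k : ℝ) := by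
    refine labelProb_eq_card_div n k _ A z Z (hZD.trans hDP) fun s _ => ?_
    simp only [A]
    split_ifs with h1 h2
    · exact iff_of_false hyz fun h => hYZ s h h1
    · simp [h2]
    · simp [h2, hwz]
  have hA'y : labelProb n k (Finset.range n) A' y = 0 := by
    rw [labelProb_eq_card_div n k _ A' y ∅ (Finset.empty_subset _) fun s _ => ?_]
    · simp
    · simp only [A']
      split_ifs <;> simp [hyz.symm, hwy]
  have hA'z : labelProb n k (Finset.range n) A' z = (Z.card : ℝ) / (n.choose k : ℝ)
      + (1 - ((n - m).choose k : ℝ) / (n.choose k : ℝ)) := by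
    rw [labelProb_eq_card_div n k _ A' z (Z ∪ (P \ D)) hZTsub fun s _ => ?_]
    · rw [Finset.card_union_of_disjoint hZT, Nat.cast_add, hTcR]
      field_simp
    · simp only [A']
      split_ifs with h <;> simp only [h, hwz]
  refine ⟨Finset.range n, Finset.range m, A, A', by simp, hMC, by simp, fun s hs hsM => ?_,
    by rw [hAy, hYR], by rw [hAz, hZR], hA'y, by rw [hA'z, hZR], ?_⟩
  · have hsD : s ∈ D := by
      rw [Finset.mem_powersetCard] at hs ⊢
      exact ⟨Finset.subset_sdiff.2 ⟨hs.1, Finset.disjoint_iff_inter_eq_empty.2 hsM⟩, hs.2⟩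
    have hsY : s ∉ Y := fun h => (Finset.mem_sdiff.1 (hYT h)).2 hsD
    simp [A, A', hsY, hsD]
  · have h1 : ((n - m).choose k : ℝ) / (n.choose k : ℝ) < 1 := (div_lt_one hN).2 hltR
    have h2 : 0 ≤ (Z.card : ℝ) / (n.choose k : ℝ) := by positivity
    rw [hA'y, hA'z]
    linarith
end

section
/- (Tightness, Case 3.) Let n, k, m be integers with 1 ≤ k ≤ n and 1 ≤ m < n − k; write N = C(n,k) and c = C(n−m,k)/N. Let L be a set of labels with at least 3 elements, let y, z ∈ L be distinct, and let p_lb, p̄ be reals with 0 ≤ p_lb ≤ 1 − c and c ≤ p̄ ≤ 1 − p_lb. Then there exist a finite set C with |C| = n, a set M ⊆ C with |M| = m, and functions A, A' from the k-element subsets of C to L agreeing on every k-element subset disjoint from M, such that p_y = ⌈p_lb·N⌉/N, p_z = ⌊p̄·N⌋/N, p_y' = 0, and p_z' = 1. -/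
/-- A three-valued prediction function takes its first two values exactly on prescribed disjoint
families `Y` and `Z`. -/
theorem exists_labelling {α L : Type*} (Y Z : Finset α) (hYZ : Disjoint Y Z)
    (y z w : L) (hyz : y ≠ z) (hwy : w ≠ y) (hwz : w ≠ z) :
    ∃ A : α → L, (∀ s, A s = y ↔ s ∈ Y) ∧ (∀ s, A s = z ↔ s ∈ Z) := by
  classical
  refine ⟨fun s => if s ∈ Y then y else if s ∈ Z then z else w, fun s => ?_, fun s => ?_⟩
  · by_cases h1 : s ∈ Y
    · simp [h1]
    · by_cases h2 : s ∈ Z <;> simp [h1, h2, hyz.symm, hwy]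
  · by_cases h1 : s ∈ Y
    · simp [h1, Finset.disjoint_left.mp hYZ h1, hyz]
    · by_cases h2 : s ∈ Z <;> simp [h1, h2, hwz]

theorem labelProb_eq_of_iff {ι L : Type*} (n k : ℕ) (C : Finset ι) (A : Finset ι → L) (i : L)
    (S : Finset (Finset ι)) (hS : S ⊆ C.powersetCard k) (h : ∀ s, A s = i ↔ s ∈ S) :
    labelProb n k C A i = (S.card : ℝ) / (n.choose k : ℝ) := by
  classical
  unfold labelProb
  congr 3
  ext s
  simp only [Finset.mem_filter, h]
  exact ⟨fun hs => hs.2, fun hs => ⟨hS hs, hs⟩⟩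

theorem stmt9 {L : Type*}
    (n k m : ℕ) (hk1 : 1 ≤ k) (hkn : k ≤ n) (hm1 : 1 ≤ m) (hm2 : m < n - k)
    (y z : L) (hyz : y ≠ z) (hL : ∃ w : L, w ≠ y ∧ w ≠ z)
    (plb pbar : ℝ) (hplb0 : 0 ≤ plb)
    (hplb1 : plb ≤ 1 - ((n - m).choose k : ℝ) / (n.choose k : ℝ))
    (hpbar0 : ((n - m).choose k : ℝ) / (n.choose k : ℝ) ≤ pbar)
    (hpbar1 : pbar ≤ 1 - plb) :
    ∃ (C : Finset ℕ) (M : Finset ℕ) (A A' : Finset ℕ → L),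
      C.card = n ∧ M ⊆ C ∧ M.card = m ∧
      (∀ s ∈ C.powersetCard k, s ∩ M = ∅ → A s = A' s) ∧
      labelProb n k C A y = (⌈plb * (n.choose k : ℝ)⌉ : ℝ) / (n.choose k : ℝ) ∧
      labelProb n k C A z = (⌊pbar * (n.choose k : ℝ)⌋ : ℝ) / (n.choose k : ℝ) ∧
      labelProb n k C A' y = 0 ∧
      labelProb n k C A' z = 1 := by
  classical
  obtain ⟨w, hwy, hwz⟩ := hL
  set N : ℕ := n.choose k with hN
  have hNpos : 0 < N := Nat.choose_pos hkn
  have hNR : (0 : ℝ) < N := by exact_mod_cast hNpos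
  have hcb : (((n - m).choose k : ℕ) : ℤ) ≤ ⌊pbar * (N : ℝ)⌋ := by
    rw [Int.le_floor]
    have h := (div_le_iff₀ hNR).mp hpbar0
    exact_mod_cast h
  have hab : ⌈plb * (N : ℝ)⌉ + ⌊pbar * (N : ℝ)⌋ ≤ (N : ℤ) := by
    have h : ⌈plb * (N : ℝ)⌉ ≤ (N : ℤ) - ⌊pbar * (N : ℝ)⌋ := by
      rw [Int.ceil_le]
      push_cast
      have h1 := Int.floor_le (pbar * (N : ℝ))
      nlinarith
    linarith
  have ha0 : 0 ≤ ⌈plb * (N : ℝ)⌉ := Int.ceil_nonneg (by positivity)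
  obtain ⟨a, ha⟩ := Int.eq_ofNat_of_zero_le ha0
  obtain ⟨b, hb⟩ := Int.eq_ofNat_of_zero_le ((Int.natCast_nonneg _).trans hcb)
  rw [hb] at hcb
  rw [ha, hb] at hab
  have hcb' : (n - m).choose k ≤ b := by exact_mod_cast hcb
  have hab' : a + b ≤ N := by exact_mod_cast hab
  have hMC : Finset.range m ⊆ Finset.range n := Finset.range_subset_range.mpr (by omega)
  have hPcard : ((Finset.range n).powersetCard k).card = N := by simp [hN]
  have hDP : (Finset.range n \ Finset.range m).powersetCard k ⊆ (Finset.range n).powersetCard k :=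
    Finset.powersetCard_mono Finset.sdiff_subset
  have hDcard : ((Finset.range n \ Finset.range m).powersetCard k).card = (n - m).choose k := by
    rw [Finset.card_powersetCard, Finset.card_sdiff_of_subset hMC, Finset.card_range,
      Finset.card_range]
  obtain ⟨Z, hDZ, hZP, hZc⟩ := Finset.exists_subsuperset_card_eq hDP
    (hDcard.trans_le hcb') (by omega : b ≤ ((Finset.range n).powersetCard k).card)
  obtain ⟨Y, hYP, hYc⟩ := Finset.exists_subset_card_eq
    (s := (Finset.range n).powersetCard k \ Z) (n := a)
    (by rw [Finset.card_sdiff_of_subset hZP]; omega)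
  have hYZ : Disjoint Y Z := Finset.disjoint_of_subset_left hYP Finset.sdiff_disjoint
  obtain ⟨A, hAy, hAz⟩ := exists_labelling Y Z hYZ y z w hyz hwy hwz
  refine ⟨Finset.range n, Finset.range m, A, fun _ => z, Finset.card_range n, hMC,
    Finset.card_range m, fun s hs hsM => ?_, ?_, ?_, ?_, ?_⟩
  · rw [Finset.mem_powersetCard] at hs
    refine (hAz s).mpr (hDZ (Finset.mem_powersetCard.mpr ⟨?_, hs.2⟩))
    exact Finset.subset_sdiff.mpr ⟨hs.1, Finset.disjoint_iff_inter_eq_empty.mpr hsM⟩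
  · rw [labelProb_eq_of_iff n k _ A y Y (hYP.trans Finset.sdiff_subset) hAy, hYc, ha]
    simp [hN]
  · rw [labelProb_eq_of_iff n k _ A z Z hZP hAz, hZc, hb]
    simp [hN]
  · simp [labelProb, hyz.symm]
  · have h : (n.choose k : ℝ) ≠ 0 := hNR.ne'
    simp [labelProb, h]
end

section
/- Let y ∈ L and let p_lb be a real number with p_lb ≤ p_y. Let m be an integer with 0 ≤ m ≤ n − k satisfying ⌈p_lb·C(n,k)⌉/C(n,k) − ⌊(1−p_lb)·C(n,k)⌋/C(n,k) > 2 − 2·C(n−m,k)/C(n,k). Then for every set M ⊆ C with |M| ≤ m and every A' that agrees with A on every k-element subset of C disjoint from M, one has p_y' > p_i' for every label i ≠ y. (Here the upper bound 1 − p_lb on every other label probability holds automatically, since each k-element subset receives exactly one label so that ∑_i p_i = 1 and hence p_i ≤ 1 − p_y ≤ 1 − p_lb for i ≠ y.) -/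
/-- Changing the predictions only on `k`-subsets meeting `M` raises the count of a label by at most
the number of such subsets. The hypothesis is symmetric in the two functions, so this also bounds the
decrease. -/
lemma count_le_of_agree {ι L : Type*} [DecidableEq ι] [DecidableEq L] (k m : ℕ)
    (C M : Finset ι) (hMC : M ⊆ C) (hM : M.card ≤ m) (A A' : Finset ι → L)
    (h : ∀ s ∈ C.powersetCard k, s ∩ M = ∅ → A s = A' s) (j : L) :
    ((C.powersetCard k).filter (fun s => A s = j)).card + (C.card - m).choose k ≤
      ((C.powersetCard k).filter (fun s => A' s = j)).card + C.card.choose k := by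
  have hsub : (C.powersetCard k).filter (fun s => A s = j) ⊆
      (C.powersetCard k).filter (fun s => A' s = j) ∪
        (C.powersetCard k \ (C \ M).powersetCard k) := by
    intro s hs
    obtain ⟨hsC, hj⟩ := Finset.mem_filter.1 hs
    by_cases hd : s ∩ M = ∅
    · exact Finset.mem_union_left _ (Finset.mem_filter.2 ⟨hsC, (h s hsC hd).symm.trans hj⟩)
    · refine Finset.mem_union_right _ (Finset.mem_sdiff.2 ⟨hsC, fun hs' => hd ?_⟩)
      exact Finset.disjoint_iff_inter_eq_empty.1
        (Finset.disjoint_of_subset_left (Finset.mem_powersetCard.1 hs').1 Finset.sdiff_disjoint)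
  have hle := (Finset.card_le_card hsub).trans (Finset.card_union_le _ _)
  have hpart := Finset.card_sdiff_add_card_eq_card
    (Finset.powersetCard_mono (n := k) (Finset.sdiff_subset (s := C) (t := M)))
  rw [Finset.card_powersetCard, Finset.card_powersetCard, Finset.card_sdiff_of_subset hMC] at hpart
  have hmono : (C.card - m).choose k ≤ (C.card - M.card).choose k :=
    Nat.choose_le_choose k (by omega)
  omega

theorem stmt11 {ι L : Type*} [DecidableEq ι]
    (n k : ℕ) (hk1 : 1 ≤ k) (hkn : k ≤ n)
    (C : Finset ι) (hC : C.card = n)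
    (A : Finset ι → L) (y : L) (plb : ℝ)
    (hlb : plb ≤ labelProb n k C A y)
    (m : ℕ) (hm : m ≤ n - k)
    (hcert : (⌈plb * (n.choose k : ℝ)⌉ : ℝ) / (n.choose k : ℝ)
        - (⌊(1 - plb) * (n.choose k : ℝ)⌋ : ℝ) / (n.choose k : ℝ)
        > 2 - 2 * ((n - m).choose k : ℝ) / (n.choose k : ℝ)) :
    ∀ M : Finset ι, M ⊆ C → M.card ≤ m →
      ∀ A' : Finset ι → L,
        (∀ s ∈ C.powersetCard k, s ∩ M = ∅ → A s = A' s) →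
        ∀ i : L, i ≠ y → labelProb n k C A' y > labelProb n k C A' i := by
  intro M hMC hM A' hA i hi
  let := Classical.decEq L
  subst hC
  have hN : (0 : ℝ) < (C.card.choose k : ℝ) := by exact_mod_cast Nat.choose_pos hkn
  have hy := count_le_of_agree k m C M hMC hM A A' hA y
  have hi' := count_le_of_agree k m C M hMC hM A' A (fun s hs hd => (hA s hs hd).symm) i
  have hsum : ((C.powersetCard k).filter (fun s => A s = y)).card +
      ((C.powersetCard k).filter (fun s => A s = i)).card ≤ C.card.choose k := by
    rw [← Finset.card_union_of_disjoint, ← Finset.card_powersetCard]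
    · exact Finset.card_le_card
        (Finset.union_subset (Finset.filter_subset _ _) (Finset.filter_subset _ _))
    · exact Finset.disjoint_filter.2 fun s _ h1 h2 => hi (h2.symm.trans h1)
  unfold labelProb at hlb ⊢
  rw [gt_iff_lt, div_lt_div_iff_of_pos_right hN]
  rw [le_div_iff₀ hN] at hlb
  set ay := ((C.powersetCard k).filter (fun s => A s = y)).card
  set ai := ((C.powersetCard k).filter (fun s => A s = i)).card
  have hceil : ⌈plb * (C.card.choose k : ℝ)⌉ ≤ (ay : ℤ) :=
    Int.ceil_le.2 (by exact_mod_cast hlb)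
  have hfloor : (ai : ℤ) ≤ ⌊(1 - plb) * (C.card.choose k : ℝ)⌋ := by
    have hsum' : (ay : ℝ) + ai ≤ (C.card.choose k : ℝ) := by exact_mod_cast hsum
    refine Int.le_floor.2 ?_
    push_cast
    linarith
  have hcert' : (2 * (C.card.choose k : ℤ) - 2 * ((C.card - m).choose k : ℤ)) <
      ⌈plb * (C.card.choose k : ℝ)⌉ - ⌊(1 - plb) * (C.card.choose k : ℝ)⌋ := by
    rw [← sub_div, gt_iff_lt, lt_div_iff₀ hN, sub_mul, div_mul_cancel₀ _ hN.ne'] at hcert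
    exact_mod_cast hcert
  norm_cast
  omega
end

section
/- Let (Ω, F, P) be a probability space, let d be a positive integer, and let α ∈ [0,1]. Fix a finite set C of clients with |C| = n, an integer k with 1 ≤ k ≤ n, and a label set L. For each t ∈ {1,…,d}, let A_t be a function from the k-element subsets of C to L (the predictions for the t-th testing example when all clients are normal), let y_t ∈ L, let p_{t,i} = |{s ⊆ C : |s| = k, A_t(s) = i}|/C(n,k) for each label i, and let P̂_t : Ω → ℝ be a measurable random variable (the estimated lower bound on the largest label probability) such that P(P̂_t ≤ p_{t,y_t}) ≥ 1 − α/d. Then with probability at least 1 − α the following holds simultaneously for all t ∈ {1,…,d}: for every integer m with 0 ≤ m ≤ n − k satisfying ⌈P̂_t·C(n,k)⌉/C(n,k) − ⌊(1−P̂_t)·C(n,k)⌋/C(n,k) > 2 − 2·C(n−m,k)/C(n,k), every set M ⊆ C with |M| ≤ m, and every function A_t' from the k-element subsets of C to L agreeing with A_t on every k-element subset disjoint from M, one has p'_{t,y_t} > p'_{t,i} for every label i ≠ y_t, where p'_{t,i} = |{s ⊆ C : |s| = k, A_t'(s) = i}|/C(n,k). That is, the probability that the certified security levels computed from the estimated bounds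 are simultaneously correct for all d testing examples is at least 1 − α. -/
/-!
The proof combines a deterministic certificate with a union bound.

Write `N = C(n,k)` and let `a`, `a'` be the numbers of subsamples predicting `y` before and after
the corruption. Subsamples disjoint from `M` keep their prediction and there are at least
`C(n-m,k)` of them, so `a' ≥ a - (N - C(n-m,k))` (`card_filter_le_add`). If the estimated lower
bound is correct, then integrality of `a` gives `⌈P̂ N⌉ ≤ a` and `N - a ≤ ⌊(1 - P̂) N⌋`, and the
gap hypothesis becomes `2a - N > 2 (N - C(n-m,k))`. Hence `2a' > N`: the label `y` keeps a strict
majority, which beats every other label (`labelProb_lt_of_le`). So the certificates are correct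
for all `t` on the intersection of the `d` events `P̂_t ≤ p_t`, each of which fails with
probability at most `α / d`.
-/

open Classical in
/-- Corrupting `M` can take at most `C(n,k) - C(n-m,k)` subsamples away from a label. -/
lemma card_filter_le_add {ι L : Type*} {n k m : ℕ} {C M : Finset ι}
    (hC : C.card = n) (hM : M ⊆ C) (hMm : M.card ≤ m) {A A' : Finset ι → L}
    (hA : ∀ s ∈ C.powersetCard k, s ∩ M = ∅ → A s = A' s) (y : L) :
    ((C.powersetCard k).filter (fun s => A s = y)).card + (n - m).choose k ≤
      ((C.powersetCard k).filter (fun s => A' s = y)).card + n.choose k := by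
  have hsub : (C \ M).powersetCard k ⊆ C.powersetCard k :=
    Finset.powersetCard_mono Finset.sdiff_subset
  have hcover : (C.powersetCard k).filter (fun s => A s = y) ⊆
      (C.powersetCard k).filter (fun s => A' s = y) ∪
        (C.powersetCard k \ (C \ M).powersetCard k) := by
    intro s hs
    obtain ⟨hs, hy⟩ := Finset.mem_filter.1 hs
    by_cases h : s ∈ (C \ M).powersetCard k
    · have hdisj : s ∩ M = ∅ := by
        rw [← Finset.disjoint_iff_inter_eq_empty]
        exact Finset.disjoint_of_subset_left (Finset.mem_powersetCard.1 h).1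
          Finset.sdiff_disjoint
      exact Finset.mem_union_left _ (Finset.mem_filter.2 ⟨hs, hA s hs hdisj ▸ hy⟩)
    · exact Finset.mem_union_right _ (Finset.mem_sdiff.2 ⟨hs, h⟩)
  have h1 := (Finset.card_le_card hcover).trans (Finset.card_union_le _ _)
  have h2 := Finset.card_sdiff_add_card_eq_card hsub
  have h3 : ((C \ M).powersetCard k).card = (n - M.card).choose k := by
    rw [Finset.card_powersetCard, Finset.card_sdiff_of_subset hM, hC]
  have h4 : (C.powersetCard k).card = n.choose k := by
    rw [Finset.card_powersetCard, hC]
  have h5 : (n - m).choose k ≤ (n - M.card).choose k :=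
    Nat.choose_le_choose k (by omega)
  omega

/-- The deterministic certificate: whenever `q` is a correct lower bound on the label probability
of `y`, the gap condition guarantees that `y` remains the strictly most probable label. -/
lemma labelProb_lt_of_le {ι L : Type*} [DecidableEq ι] {n k m : ℕ} (hkn : k ≤ n)
    {C M : Finset ι} (hC : C.card = n) {A A' : Finset ι → L} {y : L} {q : ℝ}
    (hq : q ≤ labelProb n k C A y)
    (hgap : (⌈q * (n.choose k : ℝ)⌉ : ℝ) / (n.choose k : ℝ)
        - (⌊(1 - q) * (n.choose k : ℝ)⌋ : ℝ) / (n.choose k : ℝ)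
        > 2 - 2 * ((n - m).choose k : ℝ) / (n.choose k : ℝ))
    (hM : M ⊆ C) (hMm : M.card ≤ m)
    (hA : ∀ s ∈ C.powersetCard k, s ∩ M = ∅ → A s = A' s) {i : L} (hi : i ≠ y) :
    labelProb n k C A' i < labelProb n k C A' y := by
  classical
  have hN : (0 : ℝ) < n.choose k := by exact_mod_cast Nat.choose_pos hkn
  have hcount := card_filter_le_add (A := A) (A' := A') (k := k) hC hM hMm
    (fun s hs h => hA s hs (by convert h)) y
  have hdisj : ((C.powersetCard k).filter (fun s => A' s = i)).card +
      ((C.powersetCard k).filter (fun s => A' s = y)).card ≤ n.choose k := by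
    rw [← Finset.card_union_of_disjoint, ← hC, ← Finset.card_powersetCard]
    · exact Finset.card_le_card
        (Finset.union_subset (Finset.filter_subset _ _) (Finset.filter_subset _ _))
    · rw [Finset.disjoint_filter]
      exact fun s _ h h' => hi (h.symm.trans h')
  unfold labelProb at hq ⊢
  generalize ((C.powersetCard k).filter (fun s => A s = y)).card = a at *
  generalize ((C.powersetCard k).filter (fun s => A' s = y)).card = a' at *
  generalize ((C.powersetCard k).filter (fun s => A' s = i)).card = b' at *
  rw [le_div_iff₀ hN] at hq
  have hceil : ⌈q * (n.choose k : ℝ)⌉ ≤ (a : ℤ) := Int.ceil_le.2 (by exact_mod_cast hq)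
  have hfloor : (n.choose k : ℤ) - a ≤ ⌊(1 - q) * (n.choose k : ℝ)⌋ := by
    rw [Int.le_floor]
    push_cast
    linarith
  rw [← sub_div, gt_iff_lt, lt_div_iff₀ hN, sub_mul, div_mul_cancel₀ _ hN.ne'] at hgap
  have hceil' : (⌈q * (n.choose k : ℝ)⌉ : ℝ) ≤ a := by exact_mod_cast hceil
  have hfloor' : (n.choose k : ℝ) - a ≤ ⌊(1 - q) * (n.choose k : ℝ)⌋ := by
    exact_mod_cast hfloor
  have hcount' : (a : ℝ) + (n - m).choose k ≤ a' + n.choose k := by exact_mod_cast hcount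
  have hdisj' : (b' : ℝ) + a' ≤ n.choose k := by exact_mod_cast hdisj
  exact div_lt_div_of_pos_right (by linarith) hN

theorem stmt12 {ι L : Type*} [DecidableEq ι]
    (Ω : Type*) [MeasurableSpace Ω] (P : MeasureTheory.Measure Ω)
    [MeasureTheory.IsProbabilityMeasure P]
    (d : ℕ) (hd : 1 ≤ d) (α : ℝ) (hα0 : 0 ≤ α) (hα1 : α ≤ 1)
    (n k : ℕ) (hk1 : 1 ≤ k) (hkn : k ≤ n)
    (C : Finset ι) (hC : C.card = n)
    (A : Fin d → Finset ι → L) (y : Fin d → L)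
    (Phat : Fin d → Ω → ℝ) (hmeas : ∀ t : Fin d, Measurable (Phat t))
    (hconf : ∀ t : Fin d,
      ENNReal.ofReal (1 - α / d) ≤
        P {ω : Ω | Phat t ω ≤ labelProb n k C (A t) (y t)}) :
    ENNReal.ofReal (1 - α) ≤
      P {ω : Ω | ∀ t : Fin d, ∀ m : ℕ, m ≤ n - k →
        ((⌈Phat t ω * (n.choose k : ℝ)⌉ : ℝ) / (n.choose k : ℝ)
            - (⌊(1 - Phat t ω) * (n.choose k : ℝ)⌋ : ℝ) / (n.choose k : ℝ)
            > 2 - 2 * ((n - m).choose k : ℝ) / (n.choose k : ℝ)) →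
        ∀ M : Finset ι, M ⊆ C → M.card ≤ m →
          ∀ A' : Finset ι → L,
            (∀ s ∈ C.powersetCard k, s ∩ M = ∅ → A t s = A' s) →
            ∀ i : L, i ≠ y t →
              labelProb n k C A' (y t) > labelProb n k C A' i} := by
  have hsub : (⋂ t : Fin d, {ω : Ω | Phat t ω ≤ labelProb n k C (A t) (y t)}) ⊆
      {ω : Ω | ∀ t : Fin d, ∀ m : ℕ, m ≤ n - k →
        ((⌈Phat t ω * (n.choose k : ℝ)⌉ : ℝ) / (n.choose k : ℝ)
            - (⌊(1 - Phat t ω) * (n.choose k : ℝ)⌋ : ℝ) / (n.choose k : ℝ)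
            > 2 - 2 * ((n - m).choose k : ℝ) / (n.choose k : ℝ)) →
        ∀ M : Finset ι, M ⊆ C → M.card ≤ m →
          ∀ A' : Finset ι → L,
            (∀ s ∈ C.powersetCard k, s ∩ M = ∅ → A t s = A' s) →
            ∀ i : L, i ≠ y t →
              labelProb n k C A' (y t) > labelProb n k C A' i} := by
    intro ω hω t m _ hgap M hM hMm A' hA i hi
    exact labelProb_lt_of_le hkn hC (Set.mem_iInter.1 hω t) hgap hM hMm hA hi
  refine le_trans ?_ (MeasureTheory.measure_mono hsub)
  set E : Fin d → Set Ω := fun t => {ω : Ω | Phat t ω ≤ labelProb n k C (A t) (y t)}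
  have hE : ∀ t, MeasurableSet (E t) := fun t => measurableSet_le (hmeas t) measurable_const
  have hfail : ∀ t, P.real (E t)ᶜ ≤ α / d := by
    intro t
    have h := (ENNReal.ofReal_le_iff_le_toReal (MeasureTheory.measure_ne_top P _)).1 (hconf t)
    have h' := MeasureTheory.probReal_compl_eq_one_sub (μ := P) (hE t)
    change 1 - α / d ≤ P.real (E t) at h
    linarith
  have hd0 : (d : ℝ) ≠ 0 := by exact_mod_cast (by omega : d ≠ 0)
  have hunion : P.real (⋂ t, E t)ᶜ ≤ α := by
    rw [Set.compl_iInter]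
    calc P.real (⋃ t, (E t)ᶜ) ≤ ∑ t, P.real (E t)ᶜ := MeasureTheory.measureReal_iUnion_fintype_le _
      _ ≤ ∑ _t : Fin d, α / d := Finset.sum_le_sum fun t _ => hfail t
      _ = α := by simp [mul_div_cancel₀ _ hd0]
  have h := MeasureTheory.probReal_compl_eq_one_sub (μ := P) (MeasurableSet.iInter hE)
  rw [ENNReal.ofReal_le_iff_le_toReal (MeasureTheory.measure_ne_top P _)]
  change 1 - α ≤ P.real (⋂ t, E t)
  linarith
end
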